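/- Let G > 0 and ε > 0. There exists a strategy for one-dimensional online linear optimization — a family of functions A_n : [−G,G]^{n−1} → ℝ for n ≥ 1, where the n-th prediction is x_n = A_n(c_1,…,c_{n−1}) — such that for every time horizon T ∈ ℕ₊, every gradient sequence c_1,…,c_T ∈ [−G,G], and every comparator u ∈ ℝ: Σ_{t=1}^T c_t (x_t − u) ≤ √(G² + G Σ_{t=1}^T |c_t|) · [2ε + 2√2 |u| √(log(1 + |u|/(√2 ε))) + 4√2 |u|]. -/

import Mathlib

open scoped Classical

noncomputable section

/-- The Haar vector `h^(s,l)` in `ℝ^(2^S)` (1-based math indices mapped to 0-based `Fin`). -/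
def haarVec (S s l : ℕ) : Fin (2 ^ S) → ℝ := fun i =>
  if 2 ^ s * (l - 1) ≤ (i : ℕ) ∧ (i : ℕ) < 2 ^ s * (l - 1) + 2 ^ (s - 1) then 1
  else if 2 ^ s * (l - 1) + 2 ^ (s - 1) ≤ (i : ℕ) ∧ (i : ℕ) < 2 ^ s * l then -1
  else 0

/-- The Haar collection ℋ: the all-ones vector together with all `h^(s,l)`,
`s ∈ [1,S]`, `l ∈ [1, 2^(S-s)]`. -/
def haarSet (S : ℕ) : Set (Fin (2 ^ S) → ℝ) :=
  {fun _ => (1 : ℝ)} ∪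
    {v | ∃ s l : ℕ, 1 ≤ s ∧ s ≤ S ∧ 1 ≤ l ∧ l ≤ 2 ^ (S - s) ∧ v = haarVec S s l}

/-- Outer product of two vectors, as a matrix. -/
def outer {n : ℕ} (x y : Fin n → ℝ) : Matrix (Fin n) (Fin n) ℝ :=
  Matrix.of fun i j => x i * y j

/-- Frobenius inner product of two square matrices. -/
def frob {n : ℕ} (A B : Matrix (Fin n) (Fin n) ℝ) : ℝ := ∑ i, ∑ j, A i j * B i j

/-- The `j`-th canonical basis vector `e^(j)`. -/
def eVec {n : ℕ} (j : Fin n) : Fin n → ℝ := fun k => if k = j then 1 else 0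

/-- Right stochastic matrix: nonnegative entries, each row sums to 1. -/
def IsStochastic {n : ℕ} (M : Matrix (Fin n) (Fin n) ℝ) : Prop :=
  (∀ i j, 0 ≤ M i j) ∧ ∀ i, ∑ j, M i j = 1

/-- Membership in the probability simplex Δ(n). -/
def InSimplex {n : ℕ} (p : Fin n → ℝ) : Prop := (∀ i, 0 ≤ p i) ∧ ∑ i, p i = 1

/-- Action of a (stochastic) matrix on a distribution: `(φ(p))_j = Σ_i p_i φ_{i,j}`. -/
def act {n : ℕ} (M : Matrix (Fin n) (Fin n) ℝ) (p : Fin n → ℝ) : Fin n → ℝ :=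
  fun j => ∑ i, p i * M i j

/-- `Σ_{i=1}^{n-1} 1[M_i ≠ M_{i+1}]`: the number of consecutive-row changes of `M`. -/
def rowSwitch {n : ℕ} (M : Matrix (Fin n) (Fin n) ℝ) : ℕ :=
  (Finset.univ.filter fun i : Fin n =>
    ∃ h : (i : ℕ) + 1 < n, M i ≠ M ⟨(i : ℕ) + 1, h⟩).card

/-- Uniformity `d^unif_φ`: the frequency of the most frequent row of `φ`. -/
def dUnif {n : ℕ} (M : Matrix (Fin n) (Fin n) ℝ) : ℕ :=
  Finset.univ.sup fun i : Fin n => (Finset.univ.filter fun k : Fin n => M k = M i).card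

/-- Degree of self-map `d^self_φ`: the number of rows `i` with `φ_i = e^(i)`. -/
def dSelf {n : ℕ} (M : Matrix (Fin n) (Fin n) ℝ) : ℕ :=
  (Finset.univ.filter fun i : Fin n => M i = eVec i).card

namespace OLO
open Real MeasureTheory Set

lemma abs_sinh_le (x : ℝ) : |sinh x| ≤ |x| * exp |x| := by
  have key : ∀ y : ℝ, 0 ≤ y → sinh y ≤ y * exp y := by
    intro y hy
    have h1 := add_one_le_exp (-2 * y)
    have h2 : exp (-y) = exp (-2 * y) * exp y := by rw [← exp_add]; ring_nf
    rw [sinh_eq, h2]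
    nlinarith [exp_pos y]
  rw [abs_sinh]
  exact key _ (abs_nonneg x)

lemma cosh_sub_one_le (x : ℝ) : cosh x - 1 ≤ x ^ 2 / 2 * exp |x| := by
  have h := abs_sinh_le (x / 2)
  have h1 : cosh x = 2 * sinh (x / 2) ^ 2 + 1 := by
    have := cosh_two_mul (x / 2)
    rw [show 2 * (x / 2) = x by ring, cosh_sq] at this
    linarith
  have h2 : sinh (x / 2) ^ 2 ≤ (|x / 2| * exp |x / 2|) ^ 2 := by
    rw [← sq_abs (sinh (x / 2))]
    gcongr
  have h3 : (|x / 2| * exp |x / 2|) ^ 2 = x ^ 2 / 4 * exp |x| := by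
    rw [mul_pow, sq_abs, ← exp_nat_mul]
    congr 2
    · ring
    · rw [abs_div]; norm_num; ring
  rw [h3] at h2
  linarith

lemma exp_step_nonneg (η c : ℝ) (h0 : 0 ≤ c) (h1 : c ≤ 1) :
    exp (-(η * c) - η ^ 2 * c / 2) ≤ 1 - c * (exp (-(η ^ 2 / 2)) * sinh η) := by
  have hc := convexOn_exp.2 (mem_univ (0 : ℝ)) (mem_univ (-η - η ^ 2 / 2))
    (sub_nonneg.2 h1) h0 (by ring)
  simp only [smul_eq_mul, mul_zero, zero_add, exp_zero, mul_one] at hc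
  have h2 : exp (-η - η ^ 2 / 2) + exp (-(η ^ 2 / 2)) * sinh η ≤ 1 := by
    have h3 : exp (-η - η ^ 2 / 2) = exp (-(η ^ 2 / 2)) * exp (-η) := by
      rw [← exp_add]; ring_nf
    have h4 : exp (-η) + sinh η = cosh η := by rw [sinh_eq, cosh_eq]; ring
    rw [h3, ← mul_add, h4]
    calc exp (-(η ^ 2 / 2)) * cosh η ≤ exp (-(η ^ 2 / 2)) * exp (η ^ 2 / 2) := by
          gcongr; exact cosh_le_exp_half_sq η
      _ = 1 := by rw [← exp_add]; simp
  have h5 : -(η * c) - η ^ 2 * c / 2 = c * (-η - η ^ 2 / 2) := by ring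
  rw [h5]
  nlinarith

lemma exp_step (η c : ℝ) (h1 : |c| ≤ 1) :
    exp (-(η * c) - η ^ 2 * |c| / 2) ≤ 1 - c * (exp (-(η ^ 2 / 2)) * sinh η) := by
  rcases le_total 0 c with h | h
  · rw [abs_of_nonneg h] at *
    exact exp_step_nonneg η c h h1
  · rw [abs_of_nonpos h] at *
    have := exp_step_nonneg (-η) (-c) (by linarith) h1
    rw [sinh_neg] at this
    convert this using 2 <;> ring_nf

def hh (V S η : ℝ) : ℝ := cosh (η * S) * exp (-(η ^ 2 * V / 2))
def ff (V S η : ℝ) : ℝ := (hh V S η - 1) / η ^ 2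
def gg (V S η : ℝ) : ℝ :=
  (exp (-(η ^ 2 / 2)) * sinh η) * (sinh (η * S) * exp (-(η ^ 2 * V / 2))) / η ^ 2

lemma hh_step (V S η c : ℝ) (h1 : |c| ≤ 1) :
    hh (V + |c|) (S - c) η ≤ hh V S η -
      c * ((exp (-(η ^ 2 / 2)) * sinh η) * (sinh (η * S) * exp (-(η ^ 2 * V / 2)))) := by
  have ha := exp_step η c h1
  have hb := exp_step (-η) c h1
  rw [sinh_neg] at hb
  simp only [even_two, Even.neg_pow] at hb
  have e1 : hh (V + |c|) (S - c) η = exp (-(η ^ 2 * V / 2)) / 2 *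
      (exp (η * S) * exp (-(η * c) - η ^ 2 * |c| / 2) +
       exp (-(η * S)) * exp (-(-η * c) - η ^ 2 * |c| / 2)) := by
    have a1 : exp (η * S) * exp (-(η * c) - η ^ 2 * |c| / 2) =
       exp (η * (S - c)) * exp (- (η ^ 2 * |c| / 2)) := by
      rw [← exp_add, ← exp_add]; ring_nf
    have a2 : exp (-(η * S)) * exp (-(-η * c) - η ^ 2 * |c| / 2) =
       exp (-(η * (S - c))) * exp (- (η ^ 2 * |c| / 2)) := by
      rw [← exp_add, ← exp_add]; ring_nf
    have a3 : exp (-(η ^ 2 * (V + |c|) / 2)) =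
        exp (-(η ^ 2 * V / 2)) * exp (- (η ^ 2 * |c| / 2)) := by
      rw [← exp_add]; ring_nf
    rw [a1, a2, hh, a3, cosh_eq]; ring
  rw [e1]
  calc _ ≤ exp (-(η ^ 2 * V / 2)) / 2 *
      (exp (η * S) * (1 - c * (exp (-(η ^ 2 / 2)) * sinh η)) +
       exp (-(η * S)) * (1 - c * (exp (-(η ^ 2 / 2)) * -sinh η))) := by gcongr
    _ = _ := by rw [hh, cosh_eq, sinh_eq (η * S)]; ring

lemma ff_step (V S η c : ℝ) (h1 : |c| ≤ 1) :
    ff (V + |c|) (S - c) η ≤ ff V S η - c * gg V S η := by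
  have := hh_step V S η c h1
  unfold ff gg
  rw [← mul_div_assoc, ← sub_div]
  exact div_le_div_of_nonneg_right (by linarith) (sq_nonneg η)

/-- base integrability -/
lemma int_base (V a : ℝ) (hV : 0 < V) :
    IntegrableOn (fun η : ℝ => exp (η * a - η ^ 2 * V / 2)) (Ioi 0) := by
  have h : Integrable (fun η : ℝ => exp (a ^ 2 / V) * exp (-(V / 4) * η ^ 2)) :=
    (integrable_exp_neg_mul_sq (by positivity)).const_mul _
  refine (Integrable.mono' h (by fun_prop) ?_).integrableOn
  filter_upwards with η
  rw [norm_of_nonneg (exp_pos _).le, ← exp_add]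
  apply exp_le_exp.2
  have : a ^ 2 / V + -(V / 4) * η ^ 2 - (η * a - η ^ 2 * V / 2) = (a - V * η / 2) ^ 2 / V := by
    field_simp; ring
  have h2 : 0 ≤ (a - V * η / 2) ^ 2 / V := by positivity
  linarith

def qq (V η : ℝ) : ℝ := (1 - exp (-(η ^ 2 * V / 2))) / η ^ 2
def pp (V S η : ℝ) : ℝ := (cosh (η * S) - 1) * exp (-(η ^ 2 * V / 2)) / η ^ 2

lemma ff_eq (V S η : ℝ) : ff V S η = pp V S η - qq V η := by
  unfold ff pp qq hh; ring

lemma pp_nonneg (V S η : ℝ) : 0 ≤ pp V S η := by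
  unfold pp
  have := one_le_cosh (η * S)
  have : 0 ≤ cosh (η * S) - 1 := by linarith
  positivity

lemma qq_nonneg (V η : ℝ) (hV : 0 < V) : 0 ≤ qq V η := by
  unfold qq
  have : exp (-(η ^ 2 * V / 2)) ≤ 1 := exp_le_one_iff.2 (by
    have : 0 ≤ η ^ 2 * V / 2 := by positivity
    linarith)
  have : 0 ≤ 1 - exp (-(η ^ 2 * V / 2)) := by linarith
  positivity

lemma qq_le (V η : ℝ) (hV : 0 < V) (hη : 0 < η) :
    qq V η ≤ V * (1 + (√(V / 2) * η) ^ 2)⁻¹ := by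
  unfold qq
  rw [mul_pow, sq_sqrt (by positivity), ← div_eq_mul_inv, div_le_div_iff₀ (by positivity) (by positivity)]
  have h1 := add_one_le_exp (-(η ^ 2 * V / 2))
  have h2 := exp_pos (-(η ^ 2 * V / 2))
  have h3 : 0 < η ^ 2 * V / 2 := by positivity
  nlinarith

lemma int_cauchy (V : ℝ) (hV : 0 < V) :
    IntegrableOn (fun η : ℝ => V * (1 + (√(V / 2) * η) ^ 2)⁻¹) (Ioi 0) := by
  have h := (integrable_inv_one_add_sq.comp_mul_left' (R := √(V / 2)) (by positivity)).const_mul V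
  exact h.integrableOn

lemma int_qq (V : ℝ) (hV : 0 < V) : IntegrableOn (qq V) (Ioi 0) := by
  refine Integrable.mono' (int_cauchy V hV) (Measurable.aestronglyMeasurable (by unfold qq; fun_prop)) ?_
  filter_upwards [ae_restrict_mem measurableSet_Ioi] with η hη
  rw [norm_of_nonneg (qq_nonneg V η hV)]
  exact qq_le V η hV hη

lemma integral_qq (V : ℝ) (hV : 0 < V) : ∫ η in Ioi 0, qq V η ≤ 4 * √V := by
  have h1 : ∫ η in Ioi 0, qq V η ≤ ∫ η in Ioi 0, V * (1 + (√(V / 2) * η) ^ 2)⁻¹ :=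
    setIntegral_mono_on (int_qq V hV) (int_cauchy V hV) measurableSet_Ioi
      (fun η hη => qq_le V η hV hη)
  rw [integral_const_mul, integral_comp_mul_left_Ioi (fun x : ℝ => (1 + x ^ 2)⁻¹) 0 (by positivity),
    mul_zero, integral_Ioi_inv_one_add_sq] at h1
  refine h1.trans ?_
  simp only [arctan_zero, sub_zero, smul_eq_mul]
  have hs : √V = √2 * √(V / 2) := by rw [← sqrt_mul (by norm_num)]; congr 1; ring
  have h2 : V = 2 * (√(V / 2) * √(V / 2)) := by rw [mul_self_sqrt (by positivity)]; ring
  have hp : 0 < √(V / 2) := by positivity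
  have : V * ((√(V / 2))⁻¹ * (π / 2)) = √(V / 2) * π := by
    nth_rw 1 [h2]; field_simp
  rw [this, hs]
  have : (1 : ℝ) ≤ √2 := one_le_sqrt.2 (by norm_num)
  nlinarith [pi_le_four]

lemma int_pp (V S : ℝ) (hV : 0 < V) : IntegrableOn (pp V S) (Ioi 0) := by
  refine Integrable.mono' ((int_base V |S| hV).const_mul (S ^ 2 / 2)) (Measurable.aestronglyMeasurable (by unfold pp; fun_prop)) ?_
  filter_upwards [ae_restrict_mem measurableSet_Ioi] with η hη
  have hη' : (0 : ℝ) < η := hη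
  rw [norm_of_nonneg (pp_nonneg V S η)]
  unfold pp
  rw [div_le_iff₀ (by positivity)]
  have h := cosh_sub_one_le (η * S)
  rw [abs_mul, abs_of_pos hη'] at h
  calc _ ≤ ((η * S) ^ 2 / 2 * exp (η * |S|)) * exp (-(η ^ 2 * V / 2)) := by gcongr
    _ = _ := by rw [sub_eq_add_neg (η * |S|), exp_add]; ring

lemma int_ff (V S : ℝ) (hV : 0 < V) : IntegrableOn (ff V S) (Ioi 0) := by
  have : ff V S = fun η => pp V S η - qq V η := funext (ff_eq V S)
  rw [this]
  exact (int_pp V S hV).sub (int_qq V hV)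

lemma int_gg (V S : ℝ) (hV : 0 < V) : IntegrableOn (gg V S) (Ioi 0) := by
  refine Integrable.mono' ((int_base V (1 + |S|) hV).const_mul |S|) (Measurable.aestronglyMeasurable (by unfold gg; fun_prop)) ?_
  filter_upwards [ae_restrict_mem measurableSet_Ioi] with η hη
  have hη' : (0 : ℝ) < η := hη
  unfold gg
  rw [norm_eq_abs, abs_div, abs_of_pos (show 0 < η ^ 2 by positivity), div_le_iff₀ (by positivity)]
  simp only [abs_mul, abs_exp]
  have h1 := abs_sinh_le η
  have h2 := abs_sinh_le (η * S)
  rw [abs_mul, abs_of_pos hη'] at h2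
  rw [abs_of_pos hη'] at h1
  have h3 : exp (-(η ^ 2 / 2)) ≤ 1 := exp_le_one_iff.2 (by
    have : 0 ≤ η ^ 2 / 2 := by positivity
    linarith)
  calc _ ≤ (1 * (η * exp η)) * ((η * |S| * exp (η * |S|)) * exp (-(η ^ 2 * V / 2))) := by gcongr
    _ = _ := by
      rw [sub_eq_add_neg (η * (1 + |S|)), exp_add, mul_add, exp_add, mul_one]; ring

def FF (V S : ℝ) : ℝ := ∫ η in Ioi 0, ff V S η
def XX (V S : ℝ) : ℝ := ∫ η in Ioi 0, gg V S η

lemma FF_step (V S c : ℝ) (hV : 0 < V) (h1 : |c| ≤ 1) :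
    FF (V + |c|) (S - c) ≤ FF V S - c * XX V S := by
  unfold FF XX
  rw [← integral_const_mul, ← integral_sub (int_ff V S hV) ((int_gg V S hV).const_mul c)]
  exact setIntegral_mono_on (int_ff _ _ (by positivity))
    ((int_ff V S hV).sub ((int_gg V S hV).const_mul c)) measurableSet_Ioi
    (fun η _ => ff_step V S η c h1)

lemma FF_lower (V S : ℝ) (hV : 0 < V) : (∫ η in Ioi 0, pp V S η) - 4 * √V ≤ FF V S := by
  have : FF V S = (∫ η in Ioi 0, pp V S η) - ∫ η in Ioi 0, qq V η := by
    unfold FF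
    rw [← integral_sub (int_pp V S hV) (int_qq V hV)]
    simp only [ff_eq]
  rw [this]
  linarith [integral_qq V hV]

lemma FF_zero (V : ℝ) (hV : 0 < V) : FF V 0 ≤ 0 := by
  unfold FF
  apply integral_nonpos
  intro η
  have := qq_nonneg V η hV
  simp only [ff_eq, pp]
  simp [this]

lemma pp_abs (V S η : ℝ) : pp V |S| η = pp V S η := by
  unfold pp
  rcases abs_cases S with ⟨h, _⟩ | ⟨h, _⟩ <;> rw [h]
  rw [mul_neg, cosh_neg]

lemma pp_int_lower (V S : ℝ) (hV : 0 < V) (hS : 0 < S) :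
    V / (2 * S) * (exp (3 * (S ^ 2 / V) / 8) / 2 - 1) ≤ ∫ η in Ioi 0, pp V S η := by
  have hsub : Ioc (S / (2 * V)) (S / V) ⊆ Ioi 0 := fun x hx =>
    lt_trans (by positivity : 0 < S / (2 * V)) hx.1
  have hle : S / (2 * V) ≤ S / V := by gcongr; linarith
  have h1 : ∫ η in Ioc (S / (2 * V)) (S / V), pp V S η ≤ ∫ η in Ioi 0, pp V S η :=
    setIntegral_mono_set (int_pp V S hV) (by filter_upwards with η using pp_nonneg V S η)
      (LE.le.eventuallyLE hsub)
  refine le_trans ?_ h1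
  have h2 : ∫ η in Ioc (S / (2 * V)) (S / V), (V ^ 2 / S ^ 2 * (exp (3 * (S ^ 2 / V) / 8) / 2 - 1))
      ≤ ∫ η in Ioc (S / (2 * V)) (S / V), pp V S η := by
    apply setIntegral_mono_on (integrableOn_const (by simp)) ((int_pp V S hV).mono_set hsub) measurableSet_Ioc
    intro η hη
    have h0 : 0 < η := hsub hη
    have ha : S ≤ η * (2 * V) := (div_le_iff₀ (by positivity)).1 hη.1.le
    have hb : η * V ≤ S := (le_div_iff₀ hV).1 hη.2
    unfold pp
    have e1 : exp (3 * (S ^ 2 / V) / 8) ≤ exp (η * S) * exp (-(η ^ 2 * V / 2)) := by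
      rw [← exp_add]
      apply exp_le_exp.2
      have : η * S + -(η ^ 2 * V / 2) - 3 * (S ^ 2 / V) / 8 =
        (η * (2 * V) - S) * (3 * S - 2 * (η * V)) / (8 * V) := by field_simp; ring
      have : 0 ≤ (η * (2 * V) - S) * (3 * S - 2 * (η * V)) / (8 * V) := by
        apply div_nonneg (mul_nonneg _ _) <;> nlinarith
      linarith
    have e2 : exp (-(η ^ 2 * V / 2)) ≤ 1 := exp_le_one_iff.2 (by
      have : 0 ≤ η ^ 2 * V / 2 := by positivity
      linarith)
    have e3 : exp (3 * (S ^ 2 / V) / 8) / 2 - 1 ≤ (cosh (η * S) - 1) * exp (-(η ^ 2 * V / 2)) := by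
      rw [cosh_eq]
      nlinarith [mul_pos (exp_pos (-(η * S))) (exp_pos (-(η ^ 2 * V / 2)))]
    have e4 : 0 ≤ (cosh (η * S) - 1) * exp (-(η ^ 2 * V / 2)) :=
      mul_nonneg (by linarith [one_le_cosh (η * S)]) (exp_pos _).le
    have e5 : V ^ 2 / S ^ 2 ≤ 1 / η ^ 2 := by
      rw [div_le_div_iff₀ (by positivity) (by positivity), ← mul_pow, one_mul]
      rw [mul_comm]
      gcongr
    calc _ ≤ V ^ 2 / S ^ 2 * ((cosh (η * S) - 1) * exp (-(η ^ 2 * V / 2))) := by gcongr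
      _ ≤ 1 / η ^ 2 * ((cosh (η * S) - 1) * exp (-(η ^ 2 * V / 2))) := by gcongr
      _ = _ := by ring
  refine le_trans (le_of_eq ?_) h2
  rw [setIntegral_const, measureReal_def, Real.volume_Ioc, ENNReal.toReal_ofReal (by linarith), smul_eq_mul]
  field_simp
  ring

/-- the scalar comparison -/
lemma scalar (z v ε : ℝ) (hε : 0 < ε) (hv : 0 ≤ v)
    (hz : 2 * √2 * √(log (1 + v / (√2 * ε))) + 4 * √2 ≤ z) :
    v * z ≤ ε / 2 * (1 / (2 * z) * (exp (3 * z ^ 2 / 8) / 2 - 1)) := by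
  have h2 : √2 * √2 = 2 := mul_self_sqrt (by norm_num)
  have h20 : 0 < √2 := by positivity
  have hl := sqrt_nonneg (log (1 + v / (√2 * ε)))
  set q := √(log (1 + v / (√2 * ε))) with hq
  have hr : 0 ≤ v / (√2 * ε) := by positivity
  have hlog : 0 ≤ log (1 + v / (√2 * ε)) := log_nonneg (by linarith)
  have hq2 : q ^ 2 = log (1 + v / (√2 * ε)) := sq_sqrt hlog
  have hz0 : 4 * √2 ≤ z := by nlinarith
  have hzpos : 0 < z := by linarith
  have hzz : 8 ≤ √2 * z := by nlinarith
  have hz32 : 32 ≤ z ^ 2 := by nlinarith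
  have hqz : q ^ 2 ≤ z ^ 2 / 8 - 4 := by
    have : (2 * √2 * q) ^ 2 ≤ (z - 4 * √2) ^ 2 := by
      apply pow_le_pow_left₀ (by positivity); linarith
    nlinarith
  have hE : 1 + v / (√2 * ε) ≤ exp (z ^ 2 / 8 - 4) := by
    rw [← log_le_iff_le_exp (by linarith), ← hq2]; exact hqz
  have hv2 : v ≤ √2 * ε * exp (z ^ 2 / 8 - 4) := by
    have : v / (√2 * ε) ≤ exp (z ^ 2 / 8 - 4) := by linarith
    rw [div_le_iff₀ (by positivity)] at this; linarith
  set E := exp (z ^ 2 / 8) with hEd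
  have e4 : (50 : ℝ) ≤ exp 4 := by
    have h := exp_one_gt_d9
    have : exp 4 = exp 1 ^ 4 := by rw [← exp_nat_mul]; norm_num
    rw [this]
    calc (50 : ℝ) ≤ 2.7 ^ 4 := by norm_num
      _ ≤ exp 1 ^ 4 := by gcongr; linarith
  have hE4 : exp (z ^ 2 / 8 - 4) ≤ E / 50 := by
    rw [exp_sub]; gcongr
  have hE3 : E * (1 + z ^ 2 / 4) ≤ exp (3 * z ^ 2 / 8) := by
    have : exp (3 * z ^ 2 / 8) = E * exp (z ^ 2 / 4) := by rw [hEd, ← exp_add]; ring_nf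
    rw [this]
    have := add_one_le_exp (z ^ 2 / 4)
    have : 0 < E := exp_pos _
    gcongr; linarith
  have hE2 : 2 ≤ E := by
    have := add_one_le_exp (z ^ 2 / 8); linarith
  have hs : √2 ≤ 3 / 2 := by nlinarith
  have hv3 : v ≤ ε * (3 / 100) * E := by
    calc v ≤ √2 * ε * (E / 50) := hv2.trans (by gcongr)
      _ ≤ 3 / 2 * ε * (E / 50) := by gcongr
      _ = _ := by ring
  rw [show ε / 2 * (1 / (2 * z) * (exp (3 * z ^ 2 / 8) / 2 - 1)) =
    (ε * (exp (3 * z ^ 2 / 8) / 2 - 1)) / (4 * z) by field_simp; ring, le_div_iff₀ (by positivity)]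
  have k1 : v * z ^ 2 ≤ ε * (3 / 100) * E * z ^ 2 := by gcongr
  have k2 : ε * (12 / 100 * E * z ^ 2) ≤ ε * (exp (3 * z ^ 2 / 8) / 2 - 1) := by
    apply mul_le_mul_of_nonneg_left _ hε.le
    nlinarith [mul_nonneg (by linarith : 0 ≤ E) (sq_nonneg z)]
  nlinarith

lemma conj_bound (V S u ε : ℝ) (hV : 0 < V) (hε : 0 < ε) :
    u * S - ε / 2 * FF V S ≤ √V * (2 * ε + 2 * √2 * |u| * √(log (1 + |u| / (√2 * ε))) +
      4 * √2 * |u|) := by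
  have hF := FF_lower V S hV
  have hP : (∫ η in Ioi 0, pp V |S| η) = ∫ η in Ioi 0, pp V S η := by simp only [pp_abs]
  have hP0 : 0 ≤ ∫ η in Ioi 0, pp V S η := integral_nonneg (pp_nonneg V S)
  have huS : u * S ≤ |u| * |S| := by rw [← abs_mul]; exact le_abs_self _
  have hsV : 0 < √V := by positivity
  have hVV : √V * √V = V := mul_self_sqrt hV.le
  set B := 2 * √2 * √(log (1 + |u| / (√2 * ε))) + 4 * √2 with hB
  have hBpos : 0 < B := by positivity
  have hgoal : √V * (2 * ε + 2 * √2 * |u| * √(log (1 + |u| / (√2 * ε))) + 4 * √2 * |u|) =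
    2 * ε * √V + |u| * (B * √V) := by rw [hB]; ring
  rw [hgoal]
  suffices h : |u| * |S| ≤ |u| * (B * √V) + ε / 2 * ∫ η in Ioi 0, pp V S η by nlinarith
  rcases le_total (|S|) (B * √V) with h | h
  · have := mul_le_mul_of_nonneg_left h (abs_nonneg u)
    have : 0 ≤ ε / 2 * ∫ η in Ioi 0, pp V S η := by positivity
    linarith
  · have hSpos : 0 < |S| := lt_of_lt_of_le (by positivity) h
    have hz : B ≤ |S| / √V := (le_div_iff₀ hsV).2 h
    have hsc := scalar (|S| / √V) |u| ε hε (abs_nonneg u) hz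
    have hpl := pp_int_lower V |S| hV hSpos
    rw [hP] at hpl
    have hz2 : (|S| / √V) ^ 2 = |S| ^ 2 / V := by rw [div_pow, sq_sqrt hV.le]
    rw [hz2] at hsc
    have h3 := mul_le_mul_of_nonneg_right hsc hsV.le
    have h4 : |u| * (|S| / √V) * √V = |u| * |S| := by field_simp
    have h5 : ε / 2 * (1 / (2 * (|S| / √V)) * (exp (3 * (|S| ^ 2 / V) / 8) / 2 - 1)) * √V =
        ε / 2 * (V / (2 * |S|) * (exp (3 * (|S| ^ 2 / V) / 8) / 2 - 1)) := by
      nth_rw 4 [← hVV]; field_simp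
    rw [h4, h5] at h3
    have h6 := mul_le_mul_of_nonneg_left hpl (by positivity : 0 ≤ ε / 2)
    have : 0 ≤ |u| * (B * √V) := by positivity
    linarith

def VV (G : ℝ) (c : ℕ → ℝ) (t : ℕ) : ℝ := 1 + ∑ i ∈ Finset.range t, |c i / G|
def SS (G : ℝ) (c : ℕ → ℝ) (t : ℕ) : ℝ := -∑ i ∈ Finset.range t, c i / G

lemma VV_pos (G : ℝ) (c : ℕ → ℝ) (t : ℕ) : 0 < VV G c t := by
  have : 0 ≤ ∑ i ∈ Finset.range t, |c i / G| := Finset.sum_nonneg (fun _ _ => abs_nonneg _)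
  unfold VV; linarith

lemma telescope (G : ℝ) (hG : 0 < G) (c : ℕ → ℝ) (T : ℕ) (hc : ∀ t, t < T → |c t| ≤ G) :
    ∑ t ∈ Finset.range T, c t / G * XX (VV G c t) (SS G c t) ≤ - FF (VV G c T) (SS G c T) := by
  induction T with
  | zero =>
    have := FF_zero 1 one_pos
    simpa [VV, SS] using this
  | succ n ih =>
    have h1 := ih (fun t ht => hc t (by omega))
    have hcn : |c n / G| ≤ 1 := by
      rw [abs_div, abs_of_pos hG, div_le_one hG]; exact hc n (by omega)
    have h2 := FF_step (VV G c n) (SS G c n) (c n / G) (VV_pos G c n) hcn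
    have e1 : VV G c (n + 1) = VV G c n + |c n / G| := by
      simp only [VV, Finset.sum_range_succ]; ring
    have e2 : SS G c (n + 1) = SS G c n - c n / G := by
      simp only [SS, Finset.sum_range_succ]; ring
    rw [Finset.sum_range_succ, e1, e2]
    linarith

end OLO

/-- comparator-adaptive 1-D OLO: for any Lipschitz constant `G > 0`
and hyperparameter `ε > 0`, there exists a strategy `A` (where the `t`-th prediction,
for `t = 0, 1, 2, …`, depends only on the previously observed gradients `c_0,…,c_{t-1}`)
such that for every horizon `T ∈ ℕ₊`, every gradient sequence with `|c_t| ≤ G`, and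
every comparator `u ∈ ℝ`, the regret is bounded by
`√(G² + G Σ_t |c_t|) · [2ε + 2√2 |u| √(log(1 + |u|/(√2 ε))) + 4√2 |u|]`. -/
theorem exists_comparator_adaptive_one_d_olo (G ε : ℝ) (hG : 0 < G) (hε : 0 < ε) :
    ∃ A : (t : ℕ) → (Fin t → ℝ) → ℝ,
      ∀ T : ℕ, 0 < T → ∀ c : ℕ → ℝ, (∀ t, t < T → |c t| ≤ G) → ∀ u : ℝ,
        ∑ t ∈ Finset.range T, c t * (A t (fun i : Fin t => c i) - u) ≤
          Real.sqrt (G ^ 2 + G * ∑ t ∈ Finset.range T, |c t|) *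
            (2 * ε + 2 * Real.sqrt 2 * |u| *
                Real.sqrt (Real.log (1 + |u| / (Real.sqrt 2 * ε))) +
              4 * Real.sqrt 2 * |u|) := by
  refine ⟨fun t h => ε / 2 * OLO.XX (1 + ∑ i, |h i / G|) (-∑ i, h i / G), ?_⟩
  intro T _ c hc u
  have hA : ∀ t, (1 + ∑ i : Fin t, |c i / G|) = OLO.VV G c t := fun t => by
    rw [OLO.VV, Finset.sum_range]
  have hB : ∀ t, (-∑ i : Fin t, c i / G) = OLO.SS G c t := fun t => by
    rw [OLO.SS, Finset.sum_range]
  simp only [hA, hB]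
  have ht := OLO.telescope G hG c T hc
  have hcb := OLO.conj_bound (OLO.VV G c T) (OLO.SS G c T) u ε (OLO.VV_pos G c T) hε
  have hV : Real.sqrt (G ^ 2 + G * ∑ t ∈ Finset.range T, |c t|) =
      G * Real.sqrt (OLO.VV G c T) := by
    have : G ^ 2 + G * ∑ t ∈ Finset.range T, |c t| = G ^ 2 * OLO.VV G c T := by
      simp only [OLO.VV, abs_div, abs_of_pos hG, ← Finset.sum_div]
      field_simp
    rw [this, Real.sqrt_mul (by positivity), Real.sqrt_sq hG.le]
  have hL : ∑ t ∈ Finset.range T, c t * (ε / 2 * OLO.XX (OLO.VV G c t) (OLO.SS G c t) - u) =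
      G * (ε / 2 * ∑ t ∈ Finset.range T, c t / G * OLO.XX (OLO.VV G c t) (OLO.SS G c t)
        + u * OLO.SS G c T) := by
    rw [OLO.SS, ← Finset.sum_neg_distrib, Finset.mul_sum, Finset.mul_sum,
      ← Finset.sum_add_distrib, Finset.mul_sum]
    refine Finset.sum_congr rfl fun t _ => ?_
    field_simp
    ring
  rw [hL, hV, mul_assoc]
  refine mul_le_mul_of_nonneg_left (le_trans ?_ hcb) hG.le
  have := mul_le_mul_of_nonneg_left ht (by positivity : 0 ≤ ε / 2)
  linarith
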